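/- Let N ≥ 2, let w be a word containing no abelian N-power as a factor, and let # be a letter that does not appear in w. Then the word w# avoids abelian N-powers cyclically. -/

import Mathlib

/-- `u` is an abelian `N`-power of period `m`: a concatenation of `N` nonempty
pairwise abelian-equivalent words of common length `m`. -/
def IsAbelianPower {α : Type*} (N m : ℕ) (u : List α) : Prop :=
  0 < m ∧ ∃ f : Fin N → List α,
    u = (List.ofFn f).flatten ∧ (∀ i, (f i).length = m) ∧ ∀ i j, List.Perm (f i) (f j)

/-- `u` occurs in the infinite word `w^ω`, i.e. `u` is a factor of `w^k` for some `k`. -/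
def OccursCyc {α : Type*} (w u : List α) : Prop :=
  ∃ k : ℕ, u <:+: (List.replicate k w).flatten

/-- `w` avoids abelian `N`-powers cyclically: every abelian `N`-power of period `m`
occurring in `w^ω` satisfies `m ≥ |w|`. -/
def AvoidsAbelianCyc {α : Type*} (N : ℕ) (w : List α) : Prop :=
  ∀ m u, IsAbelianPower N m u → OccursCyc w u → w.length ≤ m

/-!
Suppose `(w#)^ω` contains an abelian `N`-power of period `m < |w#|`. If `#` does not occur in it,
it is a factor of `w`. Otherwise `#` occurs in each of its `N` blocks. Completing each block on the
right to a full period of `(w#)^ω` gives `N` complementary words of length `d = |w#| - m`; they are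
pairwise abelian equivalent and, taken in reverse order, are consecutive up to shifts by the period.
They thus form an abelian `N`-power of period `d`, and it is free of `#`, because the two powers
together cover exactly `N` periods, hence `N` occurrences of `#`. So it is a factor of `w`.
-/

section Stream

variable {α : Type*} {x : Stream' α} {L : ℕ}

theorem take_add_stream (m n : ℕ) (x : Stream' α) :
    x.take (m + n) = x.take m ++ (x.drop m).take n := by
  induction m generalizing x with
  | zero => simp
  | succ m ih => rw [Nat.succ_add, Stream'.take_succ, ih, Stream'.drop_succ, Stream'.take_succ,
      List.cons_append]

theorem take_length_append_stream (l : List α) (x : Stream' α) :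
    (l ++ₛ x).take l.length = l := by
  rw [Stream'.take_append_of_le_length _ _ _ le_rfl, List.take_length]

theorem take_drop_infix_take_stream {i n k : ℕ} (hk : i + n ≤ k) (x : Stream' α) :
    (x.drop i).take n <:+: x.take k := by
  obtain ⟨r, rfl⟩ := Nat.exists_eq_add_of_le hk
  rw [take_add_stream, take_add_stream]
  exact List.infix_append _ _ _

theorem take_drop_append_cons_infix_of_not_mem {l : List α} {a : α} {i n : ℕ} (hi : i ≤ l.length)
    (ha : a ∉ ((l ++ₛ ([a] ++ₛ x)).drop i).take n) :
    ((l ++ₛ ([a] ++ₛ x)).drop i).take n <:+: l := by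
  set y := l ++ₛ ([a] ++ₛ x) with hy
  have hlen : i + n ≤ l.length := by
    by_contra! hlt
    have hletter : (y.drop l.length).take 1 = [a] := by
      rw [hy, Stream'.drop_append_stream]
      exact take_length_append_stream [a] x
    have hinfix : (y.drop l.length).take 1 <:+: (y.drop i).take n := by
      rw [← Nat.add_sub_cancel' hi, ← Stream'.drop_drop]
      exact take_drop_infix_take_stream (by lia) _
    exact ha (hinfix.subset (by simp [hletter]))
  have hl : y.take l.length = l := take_length_append_stream l _
  exact hl ▸ take_drop_infix_take_stream hlen y

theorem exists_eq_take_drop_of_infix_take_stream {n : ℕ} {u : List α} (hu : u <:+: x.take n) :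
    ∃ i, u = (x.drop i).take u.length := by
  obtain ⟨a, b, hab⟩ := hu
  have hn : a.length + u.length + b.length = n := by
    simpa [add_assoc] using congrArg List.length hab
  rw [← hn, take_add_stream, take_add_stream] at hab
  have hau := List.append_inj_left hab (by simp)
  exact ⟨a.length, List.append_inj_right hau (by simp)⟩

theorem flatten_ofFn_take_drop_stream (N m : ℕ) (x : Stream' α) :
    (List.ofFn fun i : Fin N => (x.drop (i * m)).take m).flatten = x.take (N * m) := by
  induction N generalizing x with
  | zero => simp
  | succ N ih =>
    rw [Nat.succ_mul, Nat.add_comm (N * m), take_add_stream, ← ih]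
    simp [List.ofFn_succ, Stream'.drop_drop, Nat.succ_mul, Nat.add_comm m]

theorem drop_mul_eq_self (hx : x.drop L = x) (n : ℕ) : x.drop (n * L) = x := by
  induction n with
  | zero => simp
  | succ n ih => rw [Nat.succ_mul, ← Stream'.drop_drop, ih, hx]

theorem drop_mod_of_drop_eq_self (hx : x.drop L = x) (i : ℕ) : x.drop (i % L) = x.drop i := by
  conv_rhs => rw [← Nat.div_add_mod' i L, ← Stream'.drop_drop, drop_mul_eq_self hx]

theorem drop_drop_eq_drop_of_drop_eq_self (hx : x.drop L = x) (i : ℕ) :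
    (x.drop i).drop L = x.drop i := by
  rw [Stream'.drop_drop, Nat.add_comm, ← Stream'.drop_drop, hx]

theorem take_mul_eq_flatten_replicate (hx : x.drop L = x) (n : ℕ) :
    x.take (n * L) = (List.replicate n (x.take L)).flatten := by
  induction n with
  | zero => simp
  | succ n ih =>
    rw [Nat.succ_mul, Nat.add_comm, take_add_stream, hx, ih, List.replicate_succ,
      List.flatten_cons]

theorem take_drop_perm_take_of_drop_eq_self (hx : x.drop L = x) (i : ℕ) :
    ((x.drop i).take L).Perm (x.take L) := by
  have hswap : x.take i ++ (x.drop i).take L = x.take L ++ x.take i := by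
    rw [← take_add_stream, Nat.add_comm, take_add_stream, hx]
  exact (List.perm_append_left_iff (x.take i)).1 (hswap ▸ List.perm_append_comm)

end Stream

section Cycle

variable {α : Type*}

theorem take_length_cycle (v : List α) (hv : v ≠ []) : (Stream'.cycle v hv).take v.length = v := by
  rw [Stream'.cycle_eq, take_length_append_stream]

theorem drop_length_cycle (v : List α) (hv : v ≠ []) :
    (Stream'.cycle v hv).drop v.length = Stream'.cycle v hv := by
  conv_lhs => rw [Stream'.cycle_eq, Stream'.drop_append_stream]

theorem OccursCyc.exists_eq_take_drop_cycle {v u : List α} (hu : OccursCyc v u) (hv : v ≠ []) :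
    ∃ i, u = ((Stream'.cycle v hv).drop i).take u.length := by
  obtain ⟨k, hk⟩ := hu
  apply exists_eq_take_drop_of_infix_take_stream (n := k * v.length)
  rwa [take_mul_eq_flatten_replicate (drop_length_cycle v hv), take_length_cycle]

theorem take_drop_cycle_infix_of_not_mem {w : List α} {a : α} {i n : ℕ}
    (ha : a ∉ ((Stream'.cycle (w ++ [a]) (by simp)).drop i).take n) :
    ((Stream'.cycle (w ++ [a]) (by simp)).drop i).take n <:+: w := by
  have hperiod := drop_length_cycle (w ++ [a]) (by simp)
  have hr : i % (w ++ [a]).length ≤ w.length := by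
    simpa [Nat.lt_succ_iff] using Nat.mod_lt i (Nat.succ_pos w.length)
  rw [← drop_mod_of_drop_eq_self hperiod, Stream'.cycle_eq, Stream'.append_append_stream] at ha ⊢
  exact take_drop_append_cons_infix_of_not_mem hr ha

end Cycle

namespace IsAbelianPower

variable {α : Type*} {x : Stream' α} {N m d : ℕ} {u : List α}

theorem length_eq (hu : IsAbelianPower N m u) : u.length = N * m := by
  obtain ⟨-, f, rfl, hlen, -⟩ := hu
  simp [List.length_flatten, List.map_ofFn, Function.comp_def, hlen]

theorem dvd_count [DecidableEq α] (hu : IsAbelianPower N m u) (a : α) : N ∣ u.count a := by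
  obtain ⟨-, f, rfl, -, hperm⟩ := hu
  cases N with
  | zero => simp
  | succ N =>
    refine ⟨(f 0).count a, ?_⟩
    simp [List.count_flatten, List.map_ofFn, Function.comp_def, (hperm _ 0).count_eq,
      Nat.succ_mul, Nat.add_comm]

theorem take_iff : IsAbelianPower N m (x.take (N * m)) ↔
    0 < m ∧ ∀ i < N, ∀ j < N, ((x.drop (i * m)).take m).Perm ((x.drop (j * m)).take m) := by
  constructor
  · rintro ⟨hm, f, hf, hlen, hperm⟩
    have hblock : f = fun i : Fin N => (x.drop (i * m)).take m := by
      apply List.ofFn_injective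
      rw [List.eq_iff_flatten_eq, ← hf, flatten_ofFn_take_drop_stream]
      simp [List.map_ofFn, Function.comp_def, hlen]
    subst hblock
    exact ⟨hm, fun i hi j hj => hperm ⟨i, hi⟩ ⟨j, hj⟩⟩
  · rintro ⟨hm, hperm⟩
    exact ⟨hm, _, (flatten_ofFn_take_drop_stream N m x).symm, by simp,
      fun i j => hperm i i.2 j j.2⟩

theorem complement (hu : IsAbelianPower N m (x.take (N * m))) (hx : x.drop (m + d) = x)
    (hd : 0 < d) : IsAbelianPower N d ((x.drop (N * m)).take (N * d)) := by
  have hperm := (take_iff.1 hu).2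
  -- Modulo the period, the `j`-th block of the second power starts where the `k`-th block of the
  -- first one ends, for `k = N - 1 - j`, so the two together fill a whole period.
  have hfill : ∀ k j, k + j + 1 = N → ((x.drop (k * m)).take m ++
      ((x.drop (N * m)).drop (j * d)).take d).Perm (x.take (m + d)) := by
    rintro k j rfl
    have hdrop : (x.drop ((k + j + 1) * m)).drop (j * d) = (x.drop (k * m)).drop m := by
      rw [Stream'.drop_drop, Stream'.drop_drop,
        show (k + j + 1) * m + j * d = j * (m + d) + (k * m + m) by ring,
        ← Stream'.drop_drop, drop_mul_eq_self hx]
    rw [hdrop, ← take_add_stream]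
    exact take_drop_perm_take_of_drop_eq_self hx _
  refine take_iff.2 ⟨hd, fun i hi j hj => ?_⟩
  have hi' := hfill (N - 1 - i) i (by lia)
  have hj' := hfill (N - 1 - j) j (by lia)
  have hblocks := hperm (N - 1 - j) (by lia) (N - 1 - i) (by lia)
  exact (List.perm_append_left_iff _).1 <|
    hi'.trans (hj'.symm.trans (hblocks.append_right _))

theorem not_mem_complement [DecidableEq α] (hu : IsAbelianPower N m (x.take (N * m)))
    (hx : x.drop (m + d) = x) {a : α} (hcount : (x.take (m + d)).count a = 1)
    (ha : a ∈ x.take (N * m)) : a ∉ (x.drop (N * m)).take (N * d) := by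
  have hle : N ≤ (x.take (N * m)).count a :=
    Nat.le_of_dvd (List.count_pos_iff.2 ha) (hu.dvd_count a)
  have htotal : (x.take (N * m)).count a + ((x.drop (N * m)).take (N * d)).count a = N := by
    rw [← List.count_append, ← take_add_stream, ← Nat.mul_add, take_mul_eq_flatten_replicate hx]
    simp [List.count_flatten, hcount]
  exact List.count_eq_zero.1 (by lia)

end IsAbelianPower

theorem add_letter_avoids_cyclically {α : Type*} (N : ℕ) (hN : 2 ≤ N)
    (w : List α)
    (hfree : ¬ ∃ (m : ℕ) (v : List α), IsAbelianPower N m v ∧ v <:+: w)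
    (h : α) (hh : h ∉ w) :
    AvoidsAbelianCyc N (w ++ [h]) := by
  classical
  intro m u hu hocc
  by_contra! hlt
  obtain ⟨d, hd⟩ := Nat.exists_eq_add_of_lt hlt
  obtain ⟨i, hi⟩ := hocc.exists_eq_take_drop_cycle (by simp)
  rw [hu.length_eq] at hi
  subst hi
  set y := Stream'.cycle (w ++ [h]) (by simp)
  have hy : y.drop (m + (d + 1)) = y := by
    rw [← Nat.add_assoc, ← hd]
    exact drop_length_cycle _ _
  have hx := drop_drop_eq_drop_of_drop_eq_self hy i
  by_cases hmem : h ∈ (y.drop i).take (N * m)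
  · have hcount : ((y.drop i).take (m + (d + 1))).count h = 1 := by
      rw [(take_drop_perm_take_of_drop_eq_self hy i).count_eq, ← Nat.add_assoc, ← hd,
        take_length_cycle]
      simp [List.count_eq_zero_of_not_mem hh]
    have hno := hu.not_mem_complement hx hcount hmem
    have hpow := hu.complement hx d.succ_pos
    rw [Stream'.drop_drop] at hno hpow
    exact hfree ⟨d + 1, _, hpow, take_drop_cycle_infix_of_not_mem hno⟩
  · exact hfree ⟨m, _, hu, take_drop_cycle_infix_of_not_mem hmem⟩
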